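/- For every real coupling ḡ ≠ 0 and every real mass parameter m̄² ≥ −1, the denominator of the melonic anomalous dimension is strictly positive: (1+m̄²)²·Ω(ḡ,m̄²) + ((2+m̄²)/3)·ḡ²·π⁴ > 0, where Ω(ḡ,m̄²) := (1+m̄²)² − π²ḡ. In particular, the anomalous dimension η₀ of the unconstrained melonic flow has no singularity in the region m̄² ≥ −1, ḡ ≠ 0 (the singularity line of truncation schemes is displaced below m̄² = −1). -/

import Mathlib

open Real

/-- `Ω(ḡ, m̄²) := (1 + m̄²)² − π²ḡ`. -/
noncomputable def Omega (g m : ℝ) : ℝ := (1 + m) ^ 2 - π ^ 2 * g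

/-- The denominator of the unconstrained melonic anomalous dimension `η₀` is strictly
positive for every coupling `ḡ ≠ 0` and mass `m̄² ≥ −1`: so `η₀` has no singularity in
this region. -/
theorem den_eta0_pos (g m : ℝ) (hg : g ≠ 0) (hm : -1 ≤ m) :
    0 < (1 + m) ^ 2 * Omega g m + ((2 + m) / 3) * g ^ 2 * π ^ 4 := by
  have hx : 0 < (π ^ 2 * g) ^ 2 := by
    have := Real.pi_ne_zero
    positivity
  have hc : 0 < (2 + m) / 3 - 1 / 4 := by linarith
  have h := mul_pos hc hx
  have h2 := sq_nonneg ((1 + m) ^ 2 - π ^ 2 * g / 2)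
  unfold Omega
  have e : (1 + m) ^ 2 * ((1 + m) ^ 2 - π ^ 2 * g) + ((2 + m) / 3) * g ^ 2 * π ^ 4
      = ((1 + m) ^ 2 - π ^ 2 * g / 2) ^ 2 + ((2 + m) / 3 - 1 / 4) * (π ^ 2 * g) ^ 2 := by ring
  rw [e]
  linarith
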